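/- For every real b ≥ 0 and every integer d ≥ 3, for infinitely many integers m > 0 there are more than b^m pairwise non-isomorphic d-regular d-connected graphs on m vertices. -/

import Mathlib

/-!
Let `G` be a large `(d - 1)`-regular `(d - 1)`-connected graph on `n` vertices. Joining two copies
of `G` by the perfect matching of a permutation `π` gives a `d`-regular `d`-connected graph on `2n`
vertices. Starting from cycles and iterating with `π = 1` shows that such a `G` exists, while
varying `π` in the last step gives `n!` graphs. A homomorphism from a connected graph to a
`d`-regular one is determined by the image of a root and, for every other vertex, the choice of one
of the `d` neighbours of the image of its parent in a spanning tree. An isomorphism out of one of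
the `n!` graphs is a pair of homomorphisms out of `G`, so at most `(2n * d ^ (n - 1)) ^ 2` of them
are isomorphic to a given one, and `n!` divided by this quantity outgrows every exponential.
-/

open SimpleGraph Filter
open scoped Nat

variable {V W X : Type*} {G : SimpleGraph V} {H : SimpleGraph W} {d : ℕ}

/-- `G` is `d`-regular. Degrees are measured by `Set.ncard`, so a vertex with infinitely many
neighbours counts as having degree `0`. -/
def IsRegularGraph (G : SimpleGraph V) (d : ℕ) : Prop :=
  ∀ v, (G.neighborSet v).ncard = d

/-- `G` is `d`-connected: it has more than `d` vertices and stays connected after deleting fewer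
than `d` of them. As `Nat.card V = 0` for infinite `V`, only finite graphs qualify. -/
structure IsVertexConnected (G : SimpleGraph V) (d : ℕ) : Prop where
  lt_card : d < Nat.card V
  connected_induce_compl : ∀ s : Set V, s.ncard < d → (G.induce sᶜ).Connected

theorem IsRegularGraph.of_iso (hG : IsRegularGraph G d) (f : G ≃g H) : IsRegularGraph H d := by
  intro w
  rw [← hG (f.symm w)]
  exact Nat.card_congr (f.symm.mapNeighborSet w)

namespace IsVertexConnected

theorem finite (hG : IsVertexConnected G d) : Finite V :=
  Nat.finite_of_card_ne_zero (Nat.ne_zero_of_lt hG.lt_card)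

theorem connected (hG : IsVertexConnected G d) (hd : 0 < d) : G.Connected := by
  have h := hG.connected_induce_compl ∅ (by simpa)
  rwa [Set.compl_empty, (induceUnivIso G).connected_iff] at h

theorem of_iso (hG : IsVertexConnected G d) (f : G ≃g H) : IsVertexConnected H d where
  lt_card := Nat.card_congr f.toEquiv ▸ hG.lt_card
  connected_induce_compl s hs := by
    have hbij : Set.BijOn f (f ⁻¹' s)ᶜ sᶜ := f.toEquiv.bijOn fun _ => Iff.rfl
    rw [← (f.induce hbij).connected_iff]
    apply hG.connected_induce_compl
    rwa [Set.ncard_preimage_of_injective_subset_range f.injective (by simp [f.surjective.range_eq])]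

end IsVertexConnected

theorem isRegularGraph_cycleGraph (n : ℕ) : IsRegularGraph (cycleGraph (n + 3)) 2 := by
  intro v
  rw [Set.ncard_eq_toFinset_card', Set.toFinset_card, card_neighborSet_eq_degree,
    cycleGraph_degree_three_le]

theorem connected_induce_compl_singleton_cycleGraph (n : ℕ) (x : Fin (n + 2)) :
    ((cycleGraph (n + 2)).induce {x}ᶜ).Connected := by
  have succ_sub_succ {i j : Fin (n + 1)} (h : i.val + 1 = j.val) : j.succ - i.succ = 1 := by
    rw [sub_eq_iff_eq_add']
    ext
    have hlt : i.succ < Fin.last (n + 1) := by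
      rw [Fin.lt_def, Fin.val_succ, Fin.val_last]
      omega
    rw [Fin.val_add_one_of_lt hlt, Fin.val_succ, Fin.val_succ, h]
  let unroll : pathGraph (n + 1) →g (cycleGraph (n + 2)).induce {x}ᶜ :=
    { toFun := fun i => ⟨x + i.succ, by simp [Fin.succ_ne_zero]⟩
      map_rel' := fun {i j} hij => by
        simp only [comap_adj, Function.Embedding.subtype_apply, cycleGraph_adj,
          add_sub_add_left_eq_sub]
        exact (pathGraph_adj.1 hij).symm.imp succ_sub_succ succ_sub_succ }
  refine (pathGraph_connected n).map unroll ?_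
  rintro ⟨y, hy⟩
  obtain ⟨i, hi⟩ := Fin.exists_succ_eq.2 (sub_ne_zero.2 hy)
  exact ⟨i, Subtype.ext (by simp [unroll, hi])⟩

theorem isVertexConnected_cycleGraph (n : ℕ) : IsVertexConnected (cycleGraph (n + 3)) 2 where
  lt_card := by simp
  connected_induce_compl s hs := by
    rcases (Set.ncard_le_one_iff_eq s.toFinite).1 (Nat.le_of_lt_succ hs) with rfl | ⟨x, rfl⟩
    · rw [Set.compl_empty, (induceUnivIso _).connected_iff]
      exact cycleGraph_connected
    · exact connected_induce_compl_singleton_cycleGraph (n + 1) x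

theorem ncard_preimage_inl_add_ncard_preimage_inr [Finite V] [Finite W] (s : Set (V ⊕ W)) :
    (Sum.inl ⁻¹' s).ncard + (Sum.inr ⁻¹' s).ncard = s.ncard := by
  conv_rhs => rw [← Set.image_preimage_inl_union_image_preimage_inr s,
    Set.ncard_union_eq Set.disjoint_image_inl_image_inr,
    Set.ncard_image_of_injective _ Sum.inl_injective,
    Set.ncard_image_of_injective _ Sum.inr_injective]

theorem exists_notMem_notMem_apply [Finite V] (e : V ≃ W) {s : Set V} {t : Set W}
    (h : s.ncard + t.ncard < Nat.card V) : ∃ v, v ∉ s ∧ e v ∉ t := by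
  have : Finite W := .of_equiv V e
  have hlt : (s ∪ e ⁻¹' t).ncard < Nat.card V := by
    refine (Set.ncard_union_le _ _).trans_lt ?_
    rwa [Set.ncard_preimage_of_injective_subset_range e.injective (by simp)]
  by_contra! hcover
  have hall : s ∪ e ⁻¹' t = Set.univ :=
    Set.eq_univ_of_forall fun v => or_iff_not_imp_left.2 (hcover v)
  rw [hall, Set.ncard_univ] at hlt
  exact hlt.false

/-- The disjoint union of `G` and `H` together with the perfect matching that joins each vertex `v`
of `G` to the vertex `e v` of `H`. -/
def matchingSum (G : SimpleGraph V) (H : SimpleGraph W) (e : V ≃ W) : SimpleGraph (V ⊕ W) where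
  Adj
    | .inl u, .inl v => G.Adj u v
    | .inr u, .inr v => H.Adj u v
    | .inl v, .inr w => e v = w
    | .inr w, .inl v => e v = w
  symm.symm
    | .inl _, .inl _ => G.adj_symm
    | .inr _, .inr _ => H.adj_symm
    | .inl _, .inr _ | .inr _, .inl _ => id
  loopless.irrefl
    | .inl v => G.irrefl (v := v)
    | .inr w => H.irrefl (v := w)

namespace matchingSum

variable {e : V ≃ W}

@[simp]
theorem adj_inl_inl {u v : V} : (matchingSum G H e).Adj (.inl u) (.inl v) ↔ G.Adj u v := Iff.rfl

@[simp]
theorem adj_inr_inr {u v : W} : (matchingSum G H e).Adj (.inr u) (.inr v) ↔ H.Adj u v := Iff.rfl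

@[simp]
theorem adj_inl_inr {v : V} {w : W} : (matchingSum G H e).Adj (.inl v) (.inr w) ↔ e v = w := Iff.rfl

@[simp]
theorem adj_inr_inl {v : V} {w : W} : (matchingSum G H e).Adj (.inr w) (.inl v) ↔ e v = w := Iff.rfl

/-- The inclusion of the left summand. -/
def inlHom (G : SimpleGraph V) (H : SimpleGraph W) (e : V ≃ W) : G →g matchingSum G H e :=
  ⟨Sum.inl, id⟩

/-- The inclusion of the right summand. -/
def inrHom (G : SimpleGraph V) (H : SimpleGraph W) (e : V ≃ W) : H →g matchingSum G H e :=
  ⟨Sum.inr, id⟩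

/-- Exchanging the two summands inverts the matching. -/
def swapIso (G : SimpleGraph V) (H : SimpleGraph W) (e : V ≃ W) :
    matchingSum G H e ≃g matchingSum H G e.symm where
  toEquiv := Equiv.sumComm V W
  map_rel_iff' := by rintro (u | u) (v | v) <;> simp [Equiv.symm_apply_eq, eq_comm (b := e _)]

theorem injective (G : SimpleGraph V) (H : SimpleGraph W) :
    Function.Injective (matchingSum G H) := by
  intro e e' h
  ext v
  have hadj : (matchingSum G H e').Adj (.inl v) (.inr (e v)) := h ▸ adj_inl_inr.2 rfl
  exact (adj_inl_inr.1 hadj).symm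

theorem neighborSet_inl (v : V) :
    (matchingSum G H e).neighborSet (.inl v) =
      insert (.inr (e v)) (Sum.inl '' G.neighborSet v) := by
  ext (u | w) <;> simp [eq_comm]

theorem neighborSet_inr (w : W) :
    (matchingSum G H e).neighborSet (.inr w) =
      insert (.inl (e.symm w)) (Sum.inr '' H.neighborSet w) := by
  ext (v | u) <;> simp [Equiv.eq_symm_apply]

theorem isRegularGraph [Finite V] (hG : IsRegularGraph G d) (hH : IsRegularGraph H d) :
    IsRegularGraph (matchingSum G H e) (d + 1) := by
  have : Finite W := .of_equiv V e
  rintro (v | w)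
  · rw [neighborSet_inl, Set.ncard_insert_of_notMem (by simp),
      Set.ncard_image_of_injective _ Sum.inl_injective, hG]
  · rw [neighborSet_inr, Set.ncard_insert_of_notMem (by simp),
      Set.ncard_image_of_injective _ Sum.inr_injective, hH]

theorem connected_induce_compl_of_ncard_preimage_inl_lt (hG : IsVertexConnected G d)
    (hH : IsVertexConnected H d) {s : Set (V ⊕ W)} (hs : s.ncard ≤ d)
    (hleft : (Sum.inl ⁻¹' s).ncard < d) : ((matchingSum G H e).induce sᶜ).Connected := by
  have := hG.finite
  have := hH.finite
  have hcard := ncard_preimage_inl_add_ncard_preimage_inr s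
  obtain ⟨c, hc, hec⟩ : ∃ c, c ∉ Sum.inl ⁻¹' s ∧ e c ∉ Sum.inr ⁻¹' s :=
    exists_notMem_notMem_apply e (hcard ▸ hs.trans_lt hG.lt_card)
  let K := (matchingSum G H e).induce sᶜ
  have left_reachable {v : V} (hv : .inl v ∈ sᶜ) : K.Reachable ⟨.inl v, hv⟩ ⟨.inl c, hc⟩ :=
    ((hG.connected_induce_compl _ hleft).preconnected ⟨v, hv⟩ ⟨c, hc⟩).map
      (induceHom (t := sᶜ) (inlHom G H e) fun _ => id)
  have matched_reachable {v : V} {w : W} (hv : .inl v ∈ sᶜ) (hw : .inr w ∈ sᶜ) (h : e v = w) :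
      K.Reachable ⟨.inr w, hw⟩ ⟨.inl v, hv⟩ :=
    Adj.reachable (G := K) (adj_inr_inl.2 h : (matchingSum G H e).Adj (.inr w) (.inl v))
  have right_reachable {w : W} (hw : .inr w ∈ sᶜ) : K.Reachable ⟨.inr w, hw⟩ ⟨.inl c, hc⟩ := by
    by_cases hright : (Sum.inr ⁻¹' s).ncard < d
    · exact (((hH.connected_induce_compl _ hright).preconnected ⟨w, hw⟩ ⟨e c, hec⟩).map
        (induceHom (t := sᶜ) (inrHom G H e) fun _ => id)).trans (matched_reachable hc hec rfl)
    · have hempty : Sum.inl ⁻¹' s = ∅ := (Set.ncard_eq_zero).1 (by omega)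
      have hmate : .inl (e.symm w) ∈ sᶜ := Set.eq_empty_iff_forall_notMem.1 hempty (e.symm w)
      exact (matched_reachable hmate hw (e.apply_symm_apply w)).trans (left_reachable hmate)
  refine K.connected_iff_exists_forall_reachable.2 ⟨⟨.inl c, hc⟩, ?_⟩
  rintro ⟨v | w, h⟩
  · exact (left_reachable h).symm
  · exact (right_reachable h).symm

theorem connected_induce_compl_of_ncard_preimage_inr_lt (hG : IsVertexConnected G d)
    (hH : IsVertexConnected H d) {s : Set (V ⊕ W)} (hs : s.ncard ≤ d)
    (hright : (Sum.inr ⁻¹' s).ncard < d) : ((matchingSum G H e).induce sᶜ).Connected := by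
  let t : Set (W ⊕ V) := Equiv.sumComm W V ⁻¹' s
  have hbij : Set.BijOn (swapIso G H e) sᶜ tᶜ := (Equiv.sumComm V W).bijOn fun x => by simp [t]
  have ht : t.ncard ≤ d := by
    rwa [Set.ncard_preimage_of_injective_subset_range (Equiv.sumComm W V).injective
      (by simp only [Equiv.range_eq_univ, Set.subset_univ])]
  rw [((swapIso G H e).induce hbij).connected_iff]
  exact connected_induce_compl_of_ncard_preimage_inl_lt hH hG ht hright

theorem isVertexConnected (hG : IsVertexConnected G d) (hH : IsVertexConnected H d) (hd : 0 < d) :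
    IsVertexConnected (matchingSum G H e) (d + 1) := by
  have := hG.finite
  have := hH.finite
  refine ⟨?_, fun s hs => ?_⟩
  · have := hG.lt_card
    have := hH.lt_card
    rw [Nat.card_sum]
    omega
  · have hcard := ncard_preimage_inl_add_ncard_preimage_inr s
    have hside : (Sum.inl ⁻¹' s).ncard < d ∨ (Sum.inr ⁻¹' s).ncard < d := by omega
    rcases hside with hleft | hright
    · exact connected_induce_compl_of_ncard_preimage_inl_lt hG hH (by omega) hleft
    · exact connected_induce_compl_of_ncard_preimage_inr_lt hG hH (by omega) hright

end matchingSum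

theorem exists_isRegularGraph_isVertexConnected (hd : 2 ≤ d) (N : ℕ) :
    ∃ (V : Type) (G : SimpleGraph V),
      N < Nat.card V ∧ IsRegularGraph G d ∧ IsVertexConnected G d := by
  induction d, hd using Nat.le_induction with
  | base =>
    exact ⟨Fin (N + 3), cycleGraph (N + 3), by simp, isRegularGraph_cycleGraph N,
      isVertexConnected_cycleGraph N⟩
  | succ d hd ih =>
    obtain ⟨V, G, hN, hreg, hconn⟩ := ih
    have := hconn.finite
    refine ⟨V ⊕ V, matchingSum G G (.refl V), ?_, matchingSum.isRegularGraph hreg hreg,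
      matchingSum.isVertexConnected hconn hconn (by omega)⟩
    rw [Nat.card_sum]
    omega

theorem exists_adj_dist_lt_dist (hG : G.Connected) {r v : V} (hv : v ≠ r) :
    ∃ u, G.Adj u v ∧ G.dist u r < G.dist v r := by
  obtain ⟨p, hp⟩ := hG.exists_walk_length_eq_dist v r
  cases p with
  | nil => exact absurd rfl hv
  | cons h q => exact ⟨_, h.symm, (dist_le q).trans_lt (by simp [← hp])⟩

theorem exists_parent_adj_and_induction (hG : G.Connected) (r : V) :
    ∃ parent : ({r}ᶜ : Set V) → V, (∀ v, G.Adj (parent v) v) ∧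
      ∀ P : V → Prop, P r → (∀ v, P (parent v) → P v) → ∀ v, P v := by
  choose parent parent_adj parent_dist using
    fun v : ({r}ᶜ : Set V) => exists_adj_dist_lt_dist hG v.2
  refine ⟨parent, parent_adj, fun P hroot hstep v => ?_⟩
  induction hn : G.dist v r using Nat.strong_induction_on generalizing v with
  | _ n ih =>
    by_cases hv : v = r
    · exact hv ▸ hroot
    · exact hstep ⟨v, hv⟩ (ih _ (hn ▸ parent_dist ⟨v, hv⟩) _ rfl)

theorem card_hom_le [Finite V] [Finite W] (hG : G.Connected)
    (hH : ∀ w, (H.neighborSet w).ncard ≤ d) :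
    Nat.card (G →g H) ≤ Nat.card W * d ^ (Nat.card V - 1) := by
  obtain ⟨r⟩ := hG.nonempty
  obtain ⟨parent, parent_adj, parent_induction⟩ := exists_parent_adj_and_induction hG r
  have hindex (w : W) : Nonempty (H.neighborSet w ↪ Fin d) := by
    have := Fintype.ofFinite (H.neighborSet w)
    refine Function.Embedding.nonempty_of_card_le ?_
    rw [Fintype.card_fin, ← Nat.card_eq_fintype_card]
    exact hH w
  let index (w : W) : H.neighborSet w ↪ Fin d := (hindex w).some
  have index_inj {w w' : W} (hw : w = w') {x : H.neighborSet w} {y : H.neighborSet w'}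
      (h : index w x = index w' y) : (x : W) = y := by
    subst hw
    exact congrArg Subtype.val ((index w).injective h)
  let code (f : G →g H) : W × (({r}ᶜ : Set V) → Fin d) :=
    (f r, fun v => index (f (parent v)) ⟨f v, f.map_adj (parent_adj v)⟩)
  have code_injective : Function.Injective code := by
    intro f g h
    obtain ⟨hroot, hindices⟩ := Prod.ext_iff.1 h
    exact DFunLike.ext _ _ (parent_induction (fun v => f v = g v) hroot fun v hparent =>
      index_inj hparent (congrFun hindices v))
  calc Nat.card (G →g H)
    _ ≤ Nat.card (W × (({r}ᶜ : Set V) → Fin d)) := Nat.card_le_card_of_injective code code_injective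
    _ = Nat.card W * d ^ (Nat.card V - 1) := by
      rw [Nat.card_prod, Nat.card_fun, Nat.card_fin, Nat.card_coe_set_eq, Set.ncard_compl,
        Set.ncard_singleton]

theorem card_equiv_matchingSum_iso_le [Finite V] [Finite W] [Finite X] (G : SimpleGraph V)
    (H : SimpleGraph W) (K : SimpleGraph X) :
    Nat.card {e : V ≃ W // Nonempty (matchingSum G H e ≃g K)} ≤
      Nat.card (G →g K) * Nat.card (H →g K) := by
  let iso (e : {e : V ≃ W // Nonempty (matchingSum G H e ≃g K)}) : matchingSum G H e ≃g K :=
    e.2.some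
  let restrict (e : {e : V ≃ W // Nonempty (matchingSum G H e ≃g K)}) : (G →g K) × (H →g K) :=
    ((iso e).toHom.comp (matchingSum.inlHom G H e), (iso e).toHom.comp (matchingSum.inrHom G H e))
  rw [← Nat.card_prod]
  refine Nat.card_le_card_of_injective restrict fun e e' h => ?_
  obtain ⟨hl, hr⟩ := Prod.ext_iff.1 h
  have hiso (x : V ⊕ W) : iso e x = iso e' x := by
    rcases x with v | w
    · exact DFunLike.congr_fun hl v
    · exact DFunLike.congr_fun hr w
  refine Subtype.ext (matchingSum.injective G H ?_)
  ext x y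
  rw [← (iso e).map_adj_iff, ← (iso e').map_adj_iff, hiso, hiso]

theorem exists_finset_pairwise_not_rel {ι : Type*} [Finite ι] (r : Setoid ι) {k : ℕ}
    (hk : ∀ i, Nat.card {j // r j i} ≤ k) :
    ∃ T : Finset ι, Nat.card ι ≤ k * T.card ∧ (T : Set ι).Pairwise fun i j => ¬r i j := by
  classical
  have := Fintype.ofFinite ι
  let rep (i : ι) : ι := (Quotient.mk r i).out
  have rel_rep (i : ι) : r i (rep i) := r.symm (Quotient.mk_out i)
  refine ⟨Finset.univ.image rep, ?_, ?_⟩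
  · rw [Nat.card_eq_fintype_card, ← Finset.card_univ]
    refine Finset.card_le_mul_card_image _ k fun i _ => le_trans ?_ (hk i)
    rw [Nat.card_eq_fintype_card, Fintype.card_subtype]
    refine Finset.card_le_card fun j => ?_
    simp only [Finset.mem_filter_univ]
    rintro rfl
    exact rel_rep j
  · simp only [Finset.coe_image, Finset.coe_univ, Set.image_univ]
    rintro _ ⟨i, rfl⟩ _ ⟨j, rfl⟩ hne hrel
    have hij : r i j := r.trans (rel_rep i) (r.trans hrel (r.symm (rel_rep j)))
    exact hne (congrArg Quotient.out (Quotient.sound hij))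

theorem exists_finset_isEmpty_iso {ι : Type*} [Finite ι] (F : ι → SimpleGraph X) {k : ℕ}
    (hk : ∀ i, Nat.card {j // Nonempty (F j ≃g F i)} ≤ k) :
    ∃ S : Finset (SimpleGraph X), Nat.card ι ≤ k * S.card ∧ (∀ G ∈ S, ∃ i, F i = G) ∧
      ∀ G ∈ S, ∀ H ∈ S, G ≠ H → IsEmpty (G ≃g H) := by
  classical
  let isoSetoid : Setoid ι :=
    { r := fun i j => Nonempty (F i ≃g F j)
      iseqv := ⟨fun _ => ⟨.refl⟩, fun ⟨f⟩ => ⟨f.symm⟩, fun ⟨f⟩ ⟨g⟩ => ⟨g.comp f⟩⟩ }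
  obtain ⟨T, hcard, hT⟩ := exists_finset_pairwise_not_rel isoSetoid hk
  have hinj : Set.InjOn F T := fun i hi j hj h => by
    by_contra hne
    exact hT hi hj hne ⟨h ▸ .refl⟩
  refine ⟨T.image F, by rwa [Finset.card_image_of_injOn hinj], ?_, ?_⟩
  · intro G hG
    obtain ⟨i, -, hi⟩ := Finset.mem_image.1 hG
    exact ⟨i, hi⟩
  · simp only [Finset.forall_mem_image]
    intro i hi j hj hne
    exact not_nonempty_iff.1 (hT hi hj fun h => hne (congrArg F h))

theorem exists_finset_matchingSum_isEmpty_iso [Finite V] (hG : G.Connected)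
    (hreg : IsRegularGraph G d) (label : V ⊕ V ≃ X) :
    ∃ S : Finset (SimpleGraph X),
      (Nat.card V)! ≤ ((Nat.card V + Nat.card V) * (d + 1) ^ (Nat.card V - 1)) ^ 2 * S.card ∧
      (∀ K ∈ S, ∃ π : Equiv.Perm V, Nonempty (matchingSum G G π ≃g K)) ∧
      ∀ K ∈ S, ∀ L ∈ S, K ≠ L → IsEmpty (K ≃g L) := by
  have : Finite X := .of_equiv _ label
  let F (π : Equiv.Perm V) : SimpleGraph X := (matchingSum G G π).map label.toEmbedding
  let toF (π : Equiv.Perm V) : matchingSum G G π ≃g F π := .map label _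
  obtain ⟨S, hcard, hF, hS⟩ := exists_finset_isEmpty_iso F
      (k := ((Nat.card V + Nat.card V) * (d + 1) ^ (Nat.card V - 1)) ^ 2) fun π => by
    have hhom : Nat.card (G →g F π) ≤
        (Nat.card V + Nat.card V) * (d + 1) ^ (Nat.card V - 1) := by
      rw [← Nat.card_sum, Nat.card_congr label]
      exact card_hom_le hG fun x =>
        (IsRegularGraph.of_iso (matchingSum.isRegularGraph hreg hreg) (toF π) x).le
    calc Nat.card {σ // Nonempty (F σ ≃g F π)}
      _ = Nat.card {σ // Nonempty (matchingSum G G σ ≃g F π)} :=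
        Nat.card_congr (Equiv.subtypeEquivRight fun σ =>
          ⟨fun ⟨f⟩ => ⟨f.comp (toF σ)⟩, fun ⟨f⟩ => ⟨f.comp (toF σ).symm⟩⟩)
      _ ≤ Nat.card (G →g F π) * Nat.card (G →g F π) := card_equiv_matchingSum_iso_le G G (F π)
      _ ≤ _ := by rw [← sq]; gcongr
  refine ⟨S, by rwa [Nat.card_perm] at hcard, fun K hK => ?_, hS⟩
  obtain ⟨π, rfl⟩ := hF K hK
  exact ⟨π, ⟨toF π⟩⟩

theorem eventually_pow_mul_lt_factorial (b : ℝ) {c : ℝ} (hc : 1 ≤ c) :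
    ∀ᶠ n : ℕ in atTop, ((n + n) * c ^ (n - 1)) ^ 2 * b ^ (n + n) < n ! := by
  filter_upwards [FloorSemiring.eventually_mul_pow_lt_factorial_sub 1 (2 ^ 2 * c ^ 2 * b ^ 2) 0,
    eventually_ge_atTop 1] with n hn hpos
  have two_mul_le : (n + n : ℝ) ≤ 2 ^ n := by
    have hlt : n - 1 < 2 ^ (n - 1) := Nat.lt_two_pow_self
    have : n + n ≤ 2 ^ n := by
      rw [← Nat.sub_add_cancel hpos, pow_succ]
      omega
    exact_mod_cast this
  have hb : 0 ≤ b ^ (n + n) := Even.pow_nonneg ⟨n, rfl⟩ b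
  calc ((n + n) * c ^ (n - 1)) ^ 2 * b ^ (n + n)
    _ ≤ (2 ^ n * c ^ n) ^ 2 * b ^ (n + n) := by
      gcongr
      exact n.sub_le 1
    _ = 1 * (2 ^ 2 * c ^ 2 * b ^ 2) ^ n := by
      simp only [mul_pow, ← pow_mul, ← two_mul, mul_comm n 2, one_mul]
    _ < n ! := hn

/-- For every real `b ≥ 0` and integer `d ≥ 3`, for infinitely many `m > 0`
there are more than `b^m` pairwise non-isomorphic `d`-regular `d`-connected
graphs on `m` vertices. -/
theorem many_regular_connected_graphs (b : ℝ) (hb : 0 ≤ b) (d : ℕ) (hd : 3 ≤ d) :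
    ∀ N : ℕ, ∃ m : ℕ, N < m ∧
      ∃ S : Finset (SimpleGraph (Fin m)),
        b ^ m < (S.card : ℝ) ∧
        (∀ G ∈ S,
          (∀ v : Fin m, (G.neighborSet v).ncard = d) ∧
          d < m ∧
          (∀ s : Set (Fin m), s.ncard < d → (G.induce sᶜ).Connected)) ∧
        (∀ G ∈ S, ∀ H ∈ S, G ≠ H → IsEmpty (G ≃g H)) := by
  intro N
  obtain ⟨k, rfl⟩ : ∃ k, d = k + 1 := ⟨d - 1, by omega⟩
  obtain ⟨M, hM⟩ := eventually_atTop.1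
    (eventually_pow_mul_lt_factorial b (c := (k + 1 : ℕ)) (by simp))
  obtain ⟨V, G, hcard, hreg, hconn⟩ :=
    exists_isRegularGraph_isVertexConnected (d := k) (by omega) (N + M)
  have := hconn.finite
  set n := Nat.card V
  obtain ⟨S, hScard, hmatching, hnoniso⟩ := exists_finset_matchingSum_isEmpty_iso
    (hconn.connected (by omega)) hreg (Finite.equivFinOfCardEq (n := n + n) Nat.card_sum)
  refine ⟨n + n, by omega, S, ?_, fun K hK => ?_, hnoniso⟩
  · have hlt := (hM n (by omega)).trans_le (Nat.cast_le.2 hScard)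
    push_cast at hlt
    exact lt_of_mul_lt_mul_left hlt (by positivity)
  · obtain ⟨π, ⟨f⟩⟩ := hmatching K hK
    have hKconn := (matchingSum.isVertexConnected hconn hconn (by omega)).of_iso f
    exact ⟨IsRegularGraph.of_iso (matchingSum.isRegularGraph hreg hreg) f,
      by simpa using hKconn.lt_card, hKconn.connected_induce_compl⟩
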